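/- Let k be a field and Λ a finite-dimensional k-algebra whose semisimple quotient Λ/rad(Λ) is a separable k-algebra. For every natural number n, the following are equivalent: (a) Ext^m_Λ(M, N) = 0 for all left Λ-modules M, N and all m > n (i.e. the global dimension of Λ is at most n); (b) Ext^m_{Λ⊗_k Λᵒᵖ}(Λ, X) = 0 for all Λ-bimodules X and all m > n (i.e. the projective dimension of Λ as a Λ-bimodule is at most n). In particular the global dimension of Λ equals the projective dimension of Λ as a Λ-bimodule. -/

import Mathlib

/-!
STATEMENT 1: Let `k` be a field and `Λ` a finite-dimensional `k`-algebra whose semisimple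
quotient `Λ/rad(Λ)` is a separable `k`-algebra.  For every natural number `n`, the following
are equivalent:
(a) `Ext^m_Λ(M, N) = 0` for all left `Λ`-modules `M`, `N` and all `m > n` (i.e. the global
    dimension of `Λ` is at most `n`);
(b) `Ext^m_{Λ⊗ₖΛᵒᵖ}(Λ, X) = 0` for all `Λ`-bimodules `X` and all `m > n` (i.e. the projective
    dimension of `Λ` as a `Λ`-bimodule is at most `n`).
In particular the global dimension of `Λ` equals the projective dimension of `Λ` as a
`Λ`-bimodule.

The hypothesis that `Λ/rad(Λ)` is separable is expressed by the existence of a surjective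
`k`-algebra map `f : Λ → E` whose kernel is the Jacobson radical of `Λ`, such that `E` is
projective as a left `E ⊗[k] Eᵐᵒᵖ`-module.  A `Λ`-bimodule is a left `Λ ⊗[k] Λᵐᵒᵖ`-module,
and "Ext = 0" is expressed by `Subsingleton`.
-/

open CategoryTheory
open scoped TensorProduct

universe u

/-- The module structure over the enveloping algebra `Λ ⊗[k] Λᵐᵒᵖ` on `Λ` itself
(the regular bimodule). -/
noncomputable def envModuleSelf (k : Type u) [Field k] (Λ : Type u) [Ring Λ] [Algebra k Λ] :
    Module (Λ ⊗[k] Λᵐᵒᵖ) Λ :=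
  TensorProduct.Algebra.module


theorem oldExt_iff (k : Type u) [Field k] (R : Type u) [Ring R] [Algebra k R]
   (X Y : ModuleCat.{u} R) (m : ℕ) :
   Subsingleton (((Ext k (ModuleCat.{u} R) (m+1)).obj (Opposite.op X)).obj Y) ↔
   Subsingleton (Abelian.Ext.{u} X Y (m+1)) := by
  let P := ProjectiveResolution.of X
  have h1 : Subsingleton (((Ext k (ModuleCat.{u} R) (m+1)).obj (Opposite.op X)).obj Y) ↔
     ∀ f : P.complex.X (m+1) ⟶ Y, P.complex.d (m+2) (m+1) ≫ f = 0 →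
       ∃ g : P.complex.X m ⟶ Y, P.complex.d (m+1) m ≫ g = f := by
    rw [← ModuleCat.isZero_iff_subsingleton, (P.isoExt (m+1) Y).isZero_iff,
      ← HomologicalComplex.exactAt_iff_isZero_homology,
      HomologicalComplex.exactAt_iff' _ m (m+1) (m+2) (by simp) (by simp),
      ShortComplex.moduleCat_exact_iff]
    rfl
  rw [h1]
  constructor
  · intro h
    refine subsingleton_of_forall_eq 0 fun a => ?_
    obtain ⟨f, hf, rfl⟩ := P.extMk_surjective a (m+2) rfl
    rw [P.extMk_eq_zero_iff f (m+2) rfl hf m rfl]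
    exact h f hf
  · intro h f hf
    rw [← P.extMk_eq_zero_iff f (m+2) rfl hf m rfl]
    exact Subsingleton.elim _ _

section abs
variable {R : Type u} [Ring R] {S : ShortComplex (ModuleCat.{u} R)} 

theorem ext_shift (hS : S.ShortExact) (X : ModuleCat.{u} R)
    (h : ∀ i, Subsingleton (Abelian.Ext.{u} X S.X₂ (i+1))) (m : ℕ) :
    Subsingleton (Abelian.Ext.{u} X S.X₁ (m+2)) ↔ Subsingleton (Abelian.Ext.{u} X S.X₃ (m+1)) := by
  constructor
  · intro h1
    refine subsingleton_of_forall_eq 0 fun a => ?_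
    obtain ⟨b, rfl⟩ := Abelian.Ext.covariant_sequence_exact₃ X hS a (n₁ := m+2) rfl
      (Subsingleton.elim _ _)
    rw [(h m).elim b 0, Abelian.Ext.zero_comp]
  · intro h1
    refine subsingleton_of_forall_eq 0 fun a => ?_
    obtain ⟨b, rfl⟩ := Abelian.Ext.covariant_sequence_exact₁ X hS a (n₀ := m+1) 
      ((h (m+1)).elim _ _) rfl
    rw [h1.elim b 0, Abelian.Ext.zero_comp]

theorem ext_one (hS : S.ShortExact) (X : ModuleCat.{u} R)
    (h : Subsingleton (Abelian.Ext.{u} X S.X₂ 1)) :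
    Subsingleton (Abelian.Ext.{u} X S.X₁ 1) ↔ ∀ f : X ⟶ S.X₃, ∃ g : X ⟶ S.X₂, g ≫ S.g = f := by
  constructor
  · intro h1 f
    obtain ⟨b, hb⟩ := Abelian.Ext.covariant_sequence_exact₃ X hS (Abelian.Ext.mk₀ f) (n₁ := 1) rfl
      (Subsingleton.elim _ _)
    obtain ⟨g, rfl⟩ := (Abelian.Ext.mk₀_bijective _ _).2 b
    refine ⟨g, (Abelian.Ext.mk₀_bijective _ _).1 ?_⟩
    simpa using hb
  · intro h1
    refine subsingleton_of_forall_eq 0 fun a => ?_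
    obtain ⟨b, rfl⟩ := Abelian.Ext.covariant_sequence_exact₁ X hS a (n₀ := 0) 
      (h.elim _ _) rfl
    obtain ⟨f, rfl⟩ := (Abelian.Ext.mk₀_bijective _ _).2 b
    obtain ⟨g, rfl⟩ := h1 f
    rw [← Abelian.Ext.mk₀_comp_mk₀, Abelian.Ext.comp_assoc_of_second_deg_zero,
      ShortComplex.ShortExact.comp_extClass, Abelian.Ext.comp_zero]

theorem ext_mid (hS : S.ShortExact) (X : ModuleCat.{u} R) (m : ℕ)
    (h1 : Subsingleton (Abelian.Ext.{u} X S.X₁ m)) (h3 : Subsingleton (Abelian.Ext.{u} X S.X₃ m)) :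
    Subsingleton (Abelian.Ext.{u} X S.X₂ m) := by
  refine subsingleton_of_forall_eq 0 fun a => ?_
  obtain ⟨b, rfl⟩ := Abelian.Ext.covariant_sequence_exact₂ X hS a (Subsingleton.elim _ _)
  rw [h1.elim b 0, Abelian.Ext.zero_comp]

theorem ext_retract {X Y Z : ModuleCat.{u} R} (i : Y ⟶ Z) (r : Z ⟶ Y) (hir : i ≫ r = 𝟙 Y) (m : ℕ)
    (h1 : Subsingleton (Abelian.Ext.{u} X Z m)) :
    Subsingleton (Abelian.Ext.{u} X Y m) := by
  refine subsingleton_of_forall_eq 0 fun a => ?_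
  have : (a.comp (Abelian.Ext.mk₀ i) (add_zero m)).comp (Abelian.Ext.mk₀ r) (add_zero m) = a := by
    simp [hir]
  rw [← this, h1.elim (a.comp (Abelian.Ext.mk₀ i) (add_zero m)) 0, Abelian.Ext.zero_comp]

theorem ext_shift_left (hS : S.ShortExact) (hP : Projective S.X₂) (W : ModuleCat.{u} R) (m : ℕ)
    (h : Subsingleton (Abelian.Ext.{u} S.X₁ W (m+1))) :
    Subsingleton (Abelian.Ext.{u} S.X₃ W (m+2)) := by
  refine subsingleton_of_forall_eq 0 fun a => ?_
  obtain ⟨b, rfl⟩ := Abelian.Ext.contravariant_sequence_exact₃ hS W a 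
    (Abelian.Ext.eq_zero_of_projective _) (n₀ := m+1) (by omega)
  rw [h.elim b 0, Abelian.Ext.comp_zero]

theorem ext_one_left (hS : S.ShortExact) (hP : Projective S.X₂) (W : ModuleCat.{u} R)
    (h : ∀ f : S.X₁ ⟶ W, ∃ g : S.X₂ ⟶ W, S.f ≫ g = f) :
    Subsingleton (Abelian.Ext.{u} S.X₃ W 1) := by
  refine subsingleton_of_forall_eq 0 fun a => ?_
  obtain ⟨b, rfl⟩ := Abelian.Ext.contravariant_sequence_exact₃ hS W a 
    (Abelian.Ext.eq_zero_of_projective _) (n₀ := 0) (by omega)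
  obtain ⟨f, rfl⟩ := (Abelian.Ext.mk₀_bijective _ _).2 b
  obtain ⟨g, rfl⟩ := h f
  rw [← Abelian.Ext.mk₀_comp_mk₀, ShortComplex.ShortExact.extClass_comp_assoc]

end abs

section mods
variable (k : Type u) [Field k] (Λ : Type u) [Ring Λ] [Algebra k Λ]

/-- Λe-linear map from left and right linearity. -/
def mkBi {k Λ : Type u} [Field k] [Ring Λ] [Algebra k Λ] {X Y : Type u} [AddCommGroup X] [AddCommGroup Y]
    [Module (Λ ⊗[k] Λᵐᵒᵖ) X] [Module (Λ ⊗[k] Λᵐᵒᵖ) Y] (f : X →+ Y)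
    (hl : ∀ (a : Λ) x, f ((a ⊗ₜ[k] (1 : Λᵐᵒᵖ)) • x) = (a ⊗ₜ[k] (1 : Λᵐᵒᵖ)) • f x)
    (hr : ∀ (b : Λᵐᵒᵖ) x, f (((1 : Λ) ⊗ₜ[k] b) • x) = ((1 : Λ) ⊗ₜ[k] b) • f x) :
    X →ₗ[Λ ⊗[k] Λᵐᵒᵖ] Y :=
  { f with
    map_smul' := by
      intro t x
      change f (t • x) = t • f x
      induction t with
      | zero =>
        exact (congrArg f (zero_smul (Λ ⊗[k] Λᵐᵒᵖ) x)).trans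
          ((map_zero f).trans (zero_smul (Λ ⊗[k] Λᵐᵒᵖ) (f x)).symm)
      | add s t hs ht => simp only [add_smul, map_add, hs, ht]
      | tmul a b =>
        have : a ⊗ₜ[k] b = (a ⊗ₜ[k] (1 : Λᵐᵒᵖ)) * ((1 : Λ) ⊗ₜ[k] b) := by simp
        simp only [this, mul_smul]
        rw [hl, hr] }

def BHom (M N : Type u) [AddCommGroup M] [AddCommGroup N] [Module k M] [Module k N]
  [Module Λ M] [Module Λ N] [IsScalarTower k Λ M] [IsScalarTower k Λ N] : Type u := M →ₗ[k] N

namespace BHom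
variable (M N : Type u) [AddCommGroup M] [AddCommGroup N] [Module k M] [Module k N]
  [Module Λ M] [Module Λ N] [IsScalarTower k Λ M] [IsScalarTower k Λ N]

instance : AddCommGroup (BHom k Λ M N) := inferInstanceAs (AddCommGroup (M →ₗ[k] N))
instance : FunLike (BHom k Λ M N) M N := inferInstanceAs (FunLike (M →ₗ[k] N) M N)
instance : LinearMapClass (BHom k Λ M N) k M N := inferInstanceAs (LinearMapClass (M →ₗ[k] N) k M N)
instance : Module k (BHom k Λ M N) := inferInstanceAs (Module k (M →ₗ[k] N))

variable {k Λ M N}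
def mk (f : M →ₗ[k] N) : BHom k Λ M N := f
@[simp] theorem mk_apply (f : M →ₗ[k] N) (x : M) : (mk f : BHom k Λ M N) x = f x := rfl
@[ext] theorem ext {f g : BHom k Λ M N} (h : ∀ x, f x = g x) : f = g := DFunLike.ext _ _ h
@[simp] theorem add_apply (f g : BHom k Λ M N) (x : M) : (f + g) x = f x + g x := rfl
@[simp] theorem zero_apply (x : M) : (0 : BHom k Λ M N) x = 0 := rfl
@[simp] theorem ksmul_apply (c : k) (f : BHom k Λ M N) (x : M) : (c • f) x = c • f x := rfl

theorem kcomm {M : Type u} [AddCommGroup M] [Module k M] [Module Λ M] [IsScalarTower k Λ M]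
   (c : k) (a : Λ) (x : M) : a • c • x = c • a • x := by
  rw [← algebraMap_smul Λ c x, ← algebraMap_smul Λ c (a • x), smul_smul, smul_smul, Algebra.commutes]

instance : Module Λ (BHom k Λ M N) where
  smul a f := mk 
    { toFun := fun x => a • f x
      map_add' := by simp
      map_smul' := by intro c x; simp [kcomm] }
  one_smul f := by ext x; exact one_smul _ _
  mul_smul a b f := by ext x; exact mul_smul _ _ _
  smul_zero a := by ext x; exact smul_zero _
  smul_add a f g := by ext x; exact smul_add _ _ _
  add_smul a b f := by ext x; exact add_smul _ _ _
  zero_smul f := by ext x; exact zero_smul _ _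

@[simp] theorem lsmul_apply (a : Λ) (f : BHom k Λ M N) (x : M) : (a • f) x = a • f x := rfl

instance : Module Λᵐᵒᵖ (BHom k Λ M N) where
  smul a f := mk 
    { toFun := fun x => f (a.unop • x)
      map_add' := by simp
      map_smul' := by intro c x; simp [kcomm] }
  one_smul f := by ext x; exact congrArg f (one_smul _ _)
  mul_smul a b f := by ext x; exact congrArg f (mul_smul _ _ _)
  smul_zero a := by ext x; rfl
  smul_add a f g := by ext x; rfl
  add_smul a b f := by ext x; exact (congrArg f (add_smul _ _ _)).trans (map_add _ _ _)
  zero_smul f := by ext x; exact (congrArg f (zero_smul _ _)).trans (map_zero _)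

@[simp] theorem rsmul_apply (a : Λᵐᵒᵖ) (f : BHom k Λ M N) (x : M) : (a • f) x = f (a.unop • x) := rfl

instance : IsScalarTower k Λ (BHom k Λ M N) := ⟨fun c a f => by ext x; simp⟩
instance : IsScalarTower k Λᵐᵒᵖ (BHom k Λ M N) := ⟨fun c a f => by ext x; simp⟩
instance : SMulCommClass Λ Λᵐᵒᵖ (BHom k Λ M N) := ⟨fun c a f => by ext x; simp⟩

noncomputable instance : Module (Λ ⊗[k] Λᵐᵒᵖ) (BHom k Λ M N) := TensorProduct.Algebra.module

@[simp] theorem tsmul_apply (a : Λ) (b : Λᵐᵒᵖ) (f : BHom k Λ M N) (x : M) : 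
  ((a ⊗ₜ[k] b) • f) x = a • f (b.unop • x) := by
  rw [TensorProduct.Algebra.smul_def]; rfl

/-- functoriality -/
noncomputable def map {N' : Type u} [AddCommGroup N'] [Module k N'] [Module Λ N'] [IsScalarTower k Λ N']
   (g : N →ₗ[Λ] N') : BHom k Λ M N →ₗ[Λ ⊗[k] Λᵐᵒᵖ] BHom k Λ M N' :=
  mkBi { toFun := fun f => mk ((g.restrictScalars k).comp f), 
         map_zero' := by ext x; exact map_zero g
         map_add' := fun f f' => by ext x; exact map_add g _ _ }
    (by
      intro a f; ext x
      rw [tsmul_apply]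
      change g (((a ⊗ₜ[k] (1 : Λᵐᵒᵖ)) • f) x) = a • g (f _)
      rw [tsmul_apply, map_smul])
    (by
      intro a f; ext x
      rw [tsmul_apply]
      change g ((((1 : Λ) ⊗ₜ[k] a) • f) x) = (1 : Λ) • g (f _)
      rw [tsmul_apply, map_smul])

@[simp] theorem map_apply {N' : Type u} [AddCommGroup N'] [Module k N'] [Module Λ N'] [IsScalarTower k Λ N']
   (g : N →ₗ[Λ] N') (f : BHom k Λ M N) (x : M) : map g f x = g (f x) := rfl
end BHom

/-- coinduced -/
def CoInd (N : Type u) [AddCommGroup N] [Module k N] : Type u := Λ →ₗ[k] N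

namespace CoInd
variable (N : Type u) [AddCommGroup N] [Module k N]
instance : AddCommGroup (CoInd k Λ N) := inferInstanceAs (AddCommGroup (Λ →ₗ[k] N))
instance : FunLike (CoInd k Λ N) Λ N := inferInstanceAs (FunLike (Λ →ₗ[k] N) Λ N)
instance : LinearMapClass (CoInd k Λ N) k Λ N := inferInstanceAs (LinearMapClass (Λ →ₗ[k] N) k Λ N)
instance : Module k (CoInd k Λ N) := inferInstanceAs (Module k (Λ →ₗ[k] N))
variable {k Λ N}
def mk (f : Λ →ₗ[k] N) : CoInd k Λ N := f
@[simp] theorem mk_apply (f : Λ →ₗ[k] N) (x : Λ) : (mk f : CoInd k Λ N) x = f x := rfl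
@[ext] theorem ext {f g : CoInd k Λ N} (h : ∀ x, f x = g x) : f = g := DFunLike.ext _ _ h
@[simp] theorem add_apply (f g : CoInd k Λ N) (x : Λ) : (f + g) x = f x + g x := rfl
@[simp] theorem zero_apply (x : Λ) : (0 : CoInd k Λ N) x = 0 := rfl
@[simp] theorem ksmul_apply (c : k) (f : CoInd k Λ N) (x : Λ) : (c • f) x = c • f x := rfl

instance : Module Λ (CoInd k Λ N) where
  smul a f := mk 
    { toFun := fun x => f (x * a)
      map_add' := by simp [add_mul]
      map_smul' := by simp }
  one_smul f := by ext x; exact congrArg f (mul_one _)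
  mul_smul a b f := by ext x; exact congrArg f (mul_assoc _ _ _).symm
  smul_zero a := by ext x; rfl
  smul_add a f g := by ext x; rfl
  add_smul a b f := by ext x; exact (congrArg f (mul_add _ _ _)).trans (map_add _ _ _)
  zero_smul f := by ext x; exact (congrArg f (mul_zero _)).trans (map_zero _)

@[simp] theorem smul_apply (a : Λ) (f : CoInd k Λ N) (x : Λ) : (a • f) x = f (x * a) := rfl
instance : IsScalarTower k Λ (CoInd k Λ N) := ⟨fun c a f => by ext x; simp⟩

instance : Injective (ModuleCat.of Λ (CoInd k Λ N)) where
  factors {A B} g i hi := by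
    let _ : Module k A := ModuleCat.moduleOfAlgebraModule A
    let _ : Module k B := ModuleCat.moduleOfAlgebraModule B
    have : IsScalarTower k Λ A := ModuleCat.isScalarTower_of_algebra_moduleCat A
    have : IsScalarTower k Λ B := ModuleCat.isScalarTower_of_algebra_moduleCat B
    have hinj := (ModuleCat.mono_iff_injective i).1 hi
    obtain ⟨r, hr⟩ := LinearMap.exists_leftInverse_of_injective (i.hom.restrictScalars k)
      (LinearMap.ker_eq_bot.2 hinj)
    have hr' : ∀ a, r (i.hom a) = a := fun a => LinearMap.congr_fun hr a
    refine ⟨ModuleCat.ofHom 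
      { toFun := fun b => mk { toFun := fun x => (show CoInd k Λ N from g.hom (r (x • b))) 1
                               map_add' := ?_, map_smul' := ?_ }
        map_add' := ?_
        map_smul' := ?_ }, ?_⟩
    · intro x y; simp only [add_smul, map_add]; rfl
    · intro c x; 
      have : g.hom (c • r (x • b)) = c • g.hom (r (x • b)) := 
         (g.hom.restrictScalars k).map_smul c (r (x • b))
      simp only [smul_assoc, map_smul, this]; rfl
    · intro x y; ext z; simp only [smul_add, map_add]; rfl
    · intro a x; ext z; simp [smul_smul]
    · ext a x
      change (show CoInd k Λ N from g.hom (r (x • i.hom a))) 1 = (show CoInd k Λ N from g.hom a) x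
      rw [show x • i.hom a = i.hom (x • a) from (i.hom.map_smul x a).symm, hr', show g.hom (x • a) = x • g.hom a from g.hom.map_smul x a]
      change (show CoInd k Λ N from g.hom a) (1 * x) = _
      rw [one_mul]

/-- unit -/
noncomputable def unit (N : Type u) [AddCommGroup N] [Module k N] [Module Λ N] [IsScalarTower k Λ N] :
    N →ₗ[Λ] CoInd k Λ N where
  toFun n := mk { toFun := fun x => x • n, map_add' := by simp [add_smul], map_smul' := by simp }
  map_add' := by intro a b; ext x; simp
  map_smul' := by intro a b; ext x; simp only [mk_apply, LinearMap.coe_mk, AddHom.coe_mk, smul_apply, RingHom.id_apply, mul_smul]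

theorem unit_injective  (N : Type u) [AddCommGroup N] [Module k N] [Module Λ N] [IsScalarTower k Λ N] :
  Function.Injective (unit (k := k) (Λ := Λ) N) := by
  intro a b h
  have : (unit (k := k) (Λ := Λ) N a) 1 = (unit (k := k) (Λ := Λ) N b) 1 := by rw [h]
  simpa [unit] using this
end CoInd

/-- Right action as a Λᵐᵒᵖ-module. -/
@[reducible]
def rmod (X : Type u) [AddCommGroup X] [Module (Λ ⊗[k] Λᵐᵒᵖ) X] : Module Λᵐᵒᵖ X :=
  Module.compHom X (Algebra.TensorProduct.includeRight : Λᵐᵒᵖ →ₐ[k] Λ ⊗[k] Λᵐᵒᵖ).toRingHom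

theorem rmod_smul (X : Type u) [AddCommGroup X] [Module (Λ ⊗[k] Λᵐᵒᵖ) X] (b : Λᵐᵒᵖ) (x : X) :
  (rmod k Λ X).toSMul.smul b x = ((1 : Λ) ⊗ₜ[k] b) • x := rfl

def RProj (X : Type u) [AddCommGroup X] [Module (Λ ⊗[k] Λᵐᵒᵖ) X] : Prop :=
  @Module.Projective Λᵐᵒᵖ _ X _ (rmod k Λ X)

theorem rproj_free (ι : Type u) : RProj k Λ (ι →₀ (Λ ⊗[k] Λᵐᵒᵖ)) := by
  let _ := rmod k Λ (ι →₀ (Λ ⊗[k] Λᵐᵒᵖ))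
  unfold RProj
  let e : (ι →₀ (Λᵐᵒᵖ ⊗[k] Λ)) ≃+ (ι →₀ (Λ ⊗[k] Λᵐᵒᵖ)) :=
    Finsupp.mapRange.addEquiv (Algebra.TensorProduct.comm k Λᵐᵒᵖ Λ).toAddEquiv
  let e' : (ι →₀ (Λᵐᵒᵖ ⊗[k] Λ)) ≃ₗ[Λᵐᵒᵖ] (ι →₀ (Λ ⊗[k] Λᵐᵒᵖ)) :=
    { e with
      map_smul' := by
        intro b x
        change e (b • x) = ((1 : Λ) ⊗ₜ[k] b) • e x
        ext i
        change Algebra.TensorProduct.comm k Λᵐᵒᵖ Λ (b • x i) =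
          ((1 : Λ) ⊗ₜ[k] b) * Algebra.TensorProduct.comm k Λᵐᵒᵖ Λ (x i)
        generalize x i = t
        induction t with
        | zero => simp
        | add s t hs ht => rw [smul_add, map_add, map_add, mul_add, hs, ht]
        | tmul a c => simp [TensorProduct.smul_tmul'] }
  exact Module.Projective.of_equiv e'

theorem rproj_aux {A P : Type u} [Ring A] [AddCommGroup P] (i : Module A P) (h : A ≃+ P)
    (hh : ∀ b x, h (b * x) = i.toSMul.smul b (h x)) : Module.Projective A P :=
  Module.Projective.of_equiv' (M := A) { h with map_smul' := hh }

theorem env_smul (a : Λ) (b : Λᵐᵒᵖ) (x : Λ) :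
    (envModuleSelf k Λ).toSMul.smul (a ⊗ₜ[k] b) x = a * x * b.unop :=
  (@TensorProduct.Algebra.smul_def k Λ Λᵐᵒᵖ Λ _ _ _ _ _ _ _ _ _ _ _ _ a b x).trans
    (mul_assoc a x b.unop).symm

theorem rproj_self : @RProj k _ Λ _ _ Λ _ (envModuleSelf k Λ) := by
  let _ := envModuleSelf k Λ
  unfold RProj
  let _ := rmod k Λ Λ
  have hsm : ∀ (b : Λᵐᵒᵖ) (x : Λ), (rmod k Λ Λ).toSMul.smul b x = x * b.unop := by
    intro b x
    have h2 := env_smul k Λ 1 b x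
    rw [one_mul] at h2
    exact h2
  let h : Λᵐᵒᵖ ≃+ Λ := MulOpposite.opAddEquiv.symm
  exact rproj_aux (rmod k Λ Λ) h (fun b x => by
    rw [hsm]; rfl)

section
variable {k Λ}
variable {X P : Type u} [AddCommGroup X] [Module (Λ ⊗[k] Λᵐᵒᵖ) X]
  [AddCommGroup P] [Module (Λ ⊗[k] Λᵐᵒᵖ) P]

theorem rretract (g : P →ₗ[Λ ⊗[k] Λᵐᵒᵖ] X) (hg : Function.Surjective g) (hX : RProj k Λ X) :
    ∃ r : P →+ LinearMap.ker g, (∀ (b : Λᵐᵒᵖ) p, r (((1 : Λ) ⊗ₜ[k] b) • p) = ((1 : Λ) ⊗ₜ[k] b) • r p) ∧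
      ∀ x : LinearMap.ker g, r x = x := by
  let _ := rmod k Λ X
  let _ := rmod k Λ P
  have : Module.Projective Λᵐᵒᵖ X := hX
  let g' : P →ₗ[Λᵐᵒᵖ] X := { g with map_smul' := fun b x => g.map_smul _ _ }
  obtain ⟨s, hs⟩ := Module.projective_lifting_property g' LinearMap.id hg
  have hs' : ∀ x, g (s x) = x := fun x => LinearMap.congr_fun hs x
  have hs2 : ∀ (b : Λᵐᵒᵖ) x, s (((1 : Λ) ⊗ₜ[k] b) • x) = ((1 : Λ) ⊗ₜ[k] b) • s x :=
    fun b x => s.map_smul b x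
  refine ⟨{ toFun := fun p => ⟨p - s (g p), by simp [hs']⟩, map_zero' := by simp,
            map_add' := ?_ }, ?_, ?_⟩
  · intro a b; ext; simp; abel
  · intro b p; ext; simp [hs2, smul_sub]
  · intro x; ext
    have : g x = 0 := x.2
    simp [this]

theorem rproj_ker (g : P →ₗ[Λ ⊗[k] Λᵐᵒᵖ] X) (hg : Function.Surjective g) (hX : RProj k Λ X)
    (hP : RProj k Λ P) : RProj k Λ (LinearMap.ker g) := by
  obtain ⟨r, hr, hr'⟩ := rretract g hg hX
  let _ := rmod k Λ P
  let _ := rmod k Λ (LinearMap.ker g)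
  have : Module.Projective Λᵐᵒᵖ P := hP
  let i' : LinearMap.ker g →ₗ[Λᵐᵒᵖ] P := 
    { toFun := fun x => x.1, map_add' := fun _ _ => rfl, map_smul' := fun b x => rfl }
  let r' : P →ₗ[Λᵐᵒᵖ] LinearMap.ker g := { r with map_smul' := fun b x => hr b x }
  exact Module.Projective.of_split i' r' (LinearMap.ext fun x => hr' x)
end

section
variable {k Λ}
variable {M N : Type u} [AddCommGroup M] [AddCommGroup N] [Module k M] [Module k N]
  [Module Λ M] [IsScalarTower k Λ M]

theorem extend_bi {P : Type u} [AddCommGroup P] [Module (Λ ⊗[k] Λᵐᵒᵖ) P]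
    (K : Submodule (Λ ⊗[k] Λᵐᵒᵖ) P) (r : P →+ K)
    (hr : ∀ (b : Λᵐᵒᵖ) p, r (((1 : Λ) ⊗ₜ[k] b) • p) = ((1 : Λ) ⊗ₜ[k] b) • r p)
    (hr' : ∀ x : K, r x = x) (f : K →ₗ[Λ ⊗[k] Λᵐᵒᵖ] BHom k Λ M (CoInd k Λ N)) :
    ∃ g : P →ₗ[Λ ⊗[k] Λᵐᵒᵖ] BHom k Λ M (CoInd k Λ N), ∀ x : K, g x = f x := by
  have hf : ∀ (b : Λᵐᵒᵖ) (x : K) (m : M), f (((1 : Λ) ⊗ₜ[k] b) • x) m = f x (b.unop • m) := by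
    intro b x m; rw [map_smul, BHom.tsmul_apply, one_smul]
  have hk : ∀ (c : k) (a : Λ) (p : P) , r (((c • a) ⊗ₜ[k] (1 : Λᵐᵒᵖ)) • p) = 
      ((1 : Λ) ⊗ₜ[k] (c • (1 : Λᵐᵒᵖ))) • r ((a ⊗ₜ[k] (1 : Λᵐᵒᵖ)) • p) := by
    intro c a p
    rw [← hr, smul_smul]; simp [TensorProduct.smul_tmul']
  let F (p : P) : BHom k Λ M (CoInd k Λ N) := BHom.mk
    { toFun := fun m => CoInd.mk 
        { toFun := fun x => f (r ((x ⊗ₜ[k] (1 : Λᵐᵒᵖ)) • p)) m 1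
          map_add' := by
            intro x y
            rw [TensorProduct.add_tmul, add_smul, map_add, map_add]; rfl
          map_smul' := by
            intro c x
            rw [hk, hf]
            simp }
      map_add' := by intro m m'; ext x; simp
      map_smul' := by intro c m; ext x; simp }
  have hF : ∀ p m x, F p m x = f (r ((x ⊗ₜ[k] (1 : Λᵐᵒᵖ)) • p)) m 1 := fun _ _ _ => rfl
  refine ⟨mkBi { toFun := F, map_zero' := ?_, map_add' := ?_ } ?_ ?_, ?_⟩
  · ext m x; rw [hF]; simp
  · intro p q; ext m x; simp [hF]
  · intro a p
    change F _ = _ • F p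
    ext m x
    rw [BHom.tsmul_apply, CoInd.smul_apply, hF, hF, smul_smul]; simp
  · intro b p
    change F _ = _ • F p
    ext m x
    rw [BHom.tsmul_apply, CoInd.smul_apply, hF, hF, smul_smul, ← hf, ← hr, smul_smul]; simp
  · intro p
    change F p = f p
    ext m x
    rw [hF]
    have : (x ⊗ₜ[k] (1 : Λᵐᵒᵖ)) • (p : P) = (((x ⊗ₜ[k] (1 : Λᵐᵒᵖ)) • p : K) : P) := rfl
    rw [this, hr', map_smul, BHom.tsmul_apply, CoInd.smul_apply]; simp

theorem exists_cover (X : Type u) [AddCommGroup X] [Module (Λ ⊗[k] Λᵐᵒᵖ) X] :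
    ∃ (P : ModuleCat.{u} (Λ ⊗[k] Λᵐᵒᵖ)) (g : P →ₗ[Λ ⊗[k] Λᵐᵒᵖ] X), Function.Surjective g ∧
      Projective P ∧ RProj k Λ P := by
  refine ⟨ModuleCat.of _ (X →₀ (Λ ⊗[k] Λᵐᵒᵖ)), Finsupp.linearCombination _ id, ?_, ?_, ?_⟩
  · exact fun x => ⟨Finsupp.single x 1, by simp⟩
  · exact (IsProjective.iff_projective _).1 inferInstance
  · exact rproj_free k Λ X

theorem acyclic (m : ℕ) : ∀ (X : Type u) [AddCommGroup X] [Module (Λ ⊗[k] Λᵐᵒᵖ) X], RProj k Λ X →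
    Subsingleton (Abelian.Ext.{u} (ModuleCat.of (Λ ⊗[k] Λᵐᵒᵖ) X)
      (ModuleCat.of (Λ ⊗[k] Λᵐᵒᵖ) (BHom k Λ M (CoInd k Λ N))) (m+1)) := by
  induction m with
  | zero =>
    intro X _ _ hX
    obtain ⟨P, g, hg, hP, hP'⟩ := exists_cover (k := k) (Λ := Λ) X
    refine ext_one_left (LinearMap.shortExact_shortComplexKer hg) hP _ ?_
    intro f
    obtain ⟨r, hr, hr'⟩ := rretract g hg hX
    obtain ⟨h, hh⟩ := extend_bi _ r hr hr' f.hom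
    refine ⟨ModuleCat.ofHom h, ?_⟩
    ext x : 2
    exact hh x
  | succ m ih =>
    intro X _ _ hX
    obtain ⟨P, g, hg, hP, hP'⟩ := exists_cover (k := k) (Λ := Λ) X
    exact ext_shift_left (LinearMap.shortExact_shortComplexKer hg) hP _ m
      (ih _ (rproj_ker g hg hX hP'))
end

/-- regular bimodule -/
noncomputable def bimod : ModuleCat.{u} (Λ ⊗[k] Λᵐᵒᵖ) :=
  @ModuleCat.of (Λ ⊗[k] Λᵐᵒᵖ) _ Λ _ (envModuleSelf k Λ)

section key
variable {k Λ}
variable {M N : Type u} [AddCommGroup M] [AddCommGroup N] [Module k M] [Module k N]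
  [Module Λ M] [Module Λ N] [IsScalarTower k Λ M] [IsScalarTower k Λ N]

variable (k Λ) in
noncomputable def bi : Λ ≃+ bimod k Λ := AddEquiv.refl Λ

theorem bi_smul (a : Λ) (b : Λᵐᵒᵖ) (x : Λ) :
    (a ⊗ₜ[k] b) • bi k Λ x = bi k Λ (a * x * b.unop) :=
  env_smul k Λ a b x

theorem bi_smul' (a : Λ) (b : Λᵐᵒᵖ) (x : bimod k Λ) :
    (bi k Λ).symm ((a ⊗ₜ[k] b) • x) = a * (bi k Λ).symm x * b.unop := by
  obtain ⟨x, rfl⟩ := (bi k Λ).surjective x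
  rw [bi_smul, AddEquiv.symm_apply_apply, AddEquiv.symm_apply_apply]

/-- auxiliary additive map -/
noncomputable def toBAux (h : M →ₗ[Λ] N) : Λ →+ BHom k Λ M N where
  toFun a := BHom.mk
    { toFun := fun m => a • h m
      map_add' := by simp
      map_smul' := by
        intro c m
        have : h (c • m) = c • h m := (h.restrictScalars k).map_smul c m
        rw [this, BHom.kcomm]; rfl }
  map_zero' := by ext x; exact zero_smul _ _
  map_add' a b := by ext x; exact add_smul _ _ _

theorem toBAux_apply (h : M →ₗ[Λ] N) (a : Λ) (m : M) : toBAux (k := k) h a m = a • h m := rfl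

noncomputable def toBL (h : M →ₗ[Λ] N) : bimod k Λ →ₗ[Λ ⊗[k] Λᵐᵒᵖ] BHom k Λ M N :=
  mkBi ((toBAux h).comp (bi k Λ).symm.toAddMonoidHom)
      (by
        intro a x
        ext m
        rw [BHom.tsmul_apply]
        change toBAux h ((bi k Λ).symm ((a ⊗ₜ[k] (1 : Λᵐᵒᵖ)) • x)) m = a • toBAux h ((bi k Λ).symm x) _
        rw [bi_smul', toBAux_apply, toBAux_apply]
        simp [mul_smul])
      (by
        intro a x
        ext m
        rw [BHom.tsmul_apply]
        change toBAux h ((bi k Λ).symm (((1 : Λ) ⊗ₜ[k] a) • x)) m = (1 : Λ) • toBAux h ((bi k Λ).symm x) _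
        rw [bi_smul', toBAux_apply, toBAux_apply]
        simp [mul_smul])

theorem toBL_apply (h : M →ₗ[Λ] N) (a : Λ) (m : M) : toBL (k := k) h (bi k Λ a) m = a • h m := rfl

theorem toBL_surj (φ : bimod k Λ →ₗ[Λ ⊗[k] Λᵐᵒᵖ] BHom k Λ M N) :
    ∃ h : M →ₗ[Λ] N, toBL h = φ := by
  have hl : ∀ a : Λ, ∀ m, φ (bi k Λ a) m = a • φ (bi k Λ 1) m := by
    intro a m
    have h1 : bi k Λ a = (a ⊗ₜ[k] (1 : Λᵐᵒᵖ)) • bi k Λ 1 := by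
      rw [bi_smul]; simp
    rw [h1, map_smul, BHom.tsmul_apply]; simp
  have hr : ∀ a : Λ, ∀ m, φ (bi k Λ a) m = φ (bi k Λ 1) (a • m) := by
    intro a m
    have h1 : bi k Λ a = ((1 : Λ) ⊗ₜ[k] (MulOpposite.op a)) • bi k Λ 1 := by
      rw [bi_smul]; simp
    rw [h1, map_smul, BHom.tsmul_apply]; simp
  refine ⟨{ toFun := fun m => φ (bi k Λ 1) m, map_add' := by simp, map_smul' := ?_ }, ?_⟩
  · intro a m
    rw [← hr, hl]; rfl
  · ext a m
    obtain ⟨a, rfl⟩ := (bi k Λ).surjective a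
    rw [hl a m]; rfl

noncomputable def toB (h : M →ₗ[Λ] N) : bimod k Λ ⟶ ModuleCat.of (Λ ⊗[k] Λᵐᵒᵖ) (BHom k Λ M N) :=
  ModuleCat.ofHom (X := bimod k Λ) (Y := BHom k Λ M N) (toBL h)

theorem toB_surj (φ : bimod k Λ ⟶ ModuleCat.of (Λ ⊗[k] Λᵐᵒᵖ) (BHom k Λ M N)) :
    ∃ h : M →ₗ[Λ] N, toB h = φ := by
  obtain ⟨h, hh⟩ := toBL_surj φ.hom
  refine ⟨h, ?_⟩
  ext x : 2
  exact LinearMap.congr_fun hh x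

theorem toB_comp {N' : Type u} [AddCommGroup N'] [Module k N'] [Module Λ N'] [IsScalarTower k Λ N']
    (h : M →ₗ[Λ] N) (g : N →ₗ[Λ] N') :
    toB (k := k) h ≫ ModuleCat.ofHom (BHom.map g) = toB (k := k) (g ∘ₗ h) := by
  ext a : 2
  refine BHom.ext (k := k) (Λ := Λ) (M := M) (N := N') fun m => ?_
  exact g.map_smul (show Λ from a) (h m)

theorem toB_inj {h h' : M →ₗ[Λ] N} (hh : toB (k := k) h = toB (k := k) h') : h = h' := by
  ext m
  have h3 : toBL (k := k) h = toBL h' := congrArg ModuleCat.Hom.hom hh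
  have := toBL_apply (k := k) h 1 m
  rw [h3, toBL_apply, one_smul, one_smul] at this
  exact this.symm

theorem ses_mod {R : Type u} [Ring R] {A B C : Type u} [AddCommGroup A] [AddCommGroup B] [AddCommGroup C]
   [Module R A] [Module R B] [Module R C] (f : A →ₗ[R] B) (g : B →ₗ[R] C) 
   (hf : Function.Injective f) (hg : Function.Surjective g) (h : Function.Exact f g) :
   (ShortComplex.mk (ModuleCat.ofHom f) (ModuleCat.ofHom g) 
     (by ext x : 2; exact h.apply_apply_eq_zero x)).ShortExact where
  exact := (ShortComplex.ShortExact.moduleCat_exact_iff_function_exact _).mpr h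
  mono_f := (ModuleCat.mono_iff_injective _).mpr hf
  epi_g := (ModuleCat.epi_iff_surjective _).mpr hg

theorem map_inj {N' : Type u} [AddCommGroup N'] [Module k N'] [Module Λ N'] [IsScalarTower k Λ N']
    (g : N →ₗ[Λ] N') (hg : Function.Injective g) :
    Function.Injective (BHom.map (k := k) (M := M) g) := by
  intro a b h
  ext x
  apply hg
  rw [← BHom.map_apply, ← BHom.map_apply, h]

theorem map_surj {N' : Type u} [AddCommGroup N'] [Module k N'] [Module Λ N'] [IsScalarTower k Λ N']
    (g : N →ₗ[Λ] N') (hg : Function.Surjective g) :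
    Function.Surjective (BHom.map (k := k) (M := M) g) := by
  intro b
  obtain ⟨s, hs⟩ := (g.restrictScalars k).exists_rightInverse_of_surjective
    (LinearMap.range_eq_top.2 hg)
  refine ⟨BHom.mk (s ∘ₗ b), ?_⟩
  ext x
  exact LinearMap.congr_fun hs (b x)

theorem map_exact {N' N'' : Type u} [AddCommGroup N'] [Module k N'] [Module Λ N'] [IsScalarTower k Λ N']
    [AddCommGroup N''] [Module k N''] [Module Λ N''] [IsScalarTower k Λ N'']
    (f : N →ₗ[Λ] N') (g : N' →ₗ[Λ] N'') (hf : Function.Injective f) (h : Function.Exact f g) :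
    Function.Exact (BHom.map (k := k) (M := M) f) (BHom.map (k := k) (M := M) g) := by
  intro b
  constructor
  · intro hb
    have hb' : ∀ x, ∃ y, f y = b x := fun x => (h (b x)).1 (by rw [← BHom.map_apply, hb]; rfl)
    choose c hc using hb'
    refine ⟨BHom.mk { toFun := c, map_add' := ?_, map_smul' := ?_ }, ?_⟩
    · intro x y; apply hf; simp [hc]
    · intro r x; apply hf
      refine (hc _).trans ?_
      rw [map_smul, ← hc]; exact ((f.restrictScalars k).map_smul r (c x)).symm
    · ext x; exact hc x
  · rintro ⟨c, rfl⟩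
    ext x
    exact h.apply_apply_eq_zero (c x)

end key

theorem key (M : Type u) [AddCommGroup M] [Module k M] [Module Λ M] [IsScalarTower k Λ M] (m : ℕ) :
    ∀ (N : Type u) [AddCommGroup N] [Module k N] [Module Λ N] [IsScalarTower k Λ N],
    Subsingleton (Abelian.Ext.{u} (ModuleCat.of Λ M) (ModuleCat.of Λ N) (m+1)) ↔
    Subsingleton (Abelian.Ext.{u} (bimod k Λ) (ModuleCat.of (Λ ⊗[k] Λᵐᵒᵖ) (BHom k Λ M N)) (m+1)) := by
  have hac : ∀ (N : Type u) [AddCommGroup N] [Module k N] (i : ℕ), 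
      Subsingleton (Abelian.Ext.{u} (bimod k Λ)
       (ModuleCat.of (Λ ⊗[k] Λᵐᵒᵖ) (BHom k Λ M (CoInd k Λ N))) (i+1)) := fun N _ _ i =>
    @acyclic k _ Λ _ _ M N _ _ _ _ _ _ i Λ _ (envModuleSelf k Λ) (rproj_self k Λ)
  have hin : ∀ (N : Type u) [AddCommGroup N] [Module k N] (i : ℕ), 
      Subsingleton (Abelian.Ext.{u} (ModuleCat.of Λ M)
       (ModuleCat.of Λ (CoInd k Λ N)) (i+1)) := fun N _ _ i =>
    subsingleton_of_forall_eq 0 fun a => Abelian.Ext.eq_zero_of_injective a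
  induction m with
  | zero =>
    intro N _ _ _ _
    let u := CoInd.unit (k := k) (Λ := Λ) N
    let q := (LinearMap.range u).mkQ
    have hu : Function.Injective u := CoInd.unit_injective N
    have hq : Function.Surjective q := Submodule.mkQ_surjective _
    have he : Function.Exact u q := LinearMap.exact_map_mkQ_range u
    have s1 := ses_mod u q hu hq he
    have s2 := ses_mod _ _ (map_inj (k := k) (M := M) u hu) (map_surj (k := k) (M := M) q hq) 
      (map_exact (k := k) (M := M) u q hu he)
    refine (ext_one s1 _ (hin N 0)).trans (Iff.trans ?_ (ext_one s2 _ (hac N 0)).symm)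
    constructor
    · intro h φ
      obtain ⟨φ', rfl⟩ := toB_surj φ
      obtain ⟨g, hg⟩ := h (ModuleCat.ofHom φ')
      refine ⟨toB g.hom, (toB_comp g.hom q).trans ?_⟩
      congr 1
      exact congrArg ModuleCat.Hom.hom hg
    · intro h φ
      obtain ⟨g, hg⟩ := h (toB φ.hom)
      obtain ⟨g, rfl⟩ := toB_surj g
      refine ⟨ModuleCat.ofHom g, ?_⟩
      have := toB_inj ((toB_comp g q).symm.trans hg)
      ext x : 2
      exact LinearMap.congr_fun this x
  | succ m ih =>
    intro N _ _ _ _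
    let u := CoInd.unit (k := k) (Λ := Λ) N
    let q := (LinearMap.range u).mkQ
    have hu : Function.Injective u := CoInd.unit_injective N
    have hq : Function.Surjective q := Submodule.mkQ_surjective _
    have he : Function.Exact u q := LinearMap.exact_map_mkQ_range u
    have s1 := ses_mod u q hu hq he
    have s2 := ses_mod _ _ (map_inj (k := k) (M := M) u hu) (map_surj (k := k) (M := M) q hq) 
      (map_exact (k := k) (M := M) u q hu he)
    exact (ext_shift s1 _ (hin N) m).trans (Iff.trans (ih _) (ext_shift s2 _ (hac N) m).symm)
section retract

theorem sep_elt (E : Type u) [Ring E] [Algebra k E]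
    (hsep : @Module.Projective (E ⊗[k] Eᵐᵒᵖ) _ E _ (TensorProduct.Algebra.module)) :
    ∃ t : E ⊗[k] Eᵐᵒᵖ,
      (∀ b : E, (b ⊗ₜ[k] (1 : Eᵐᵒᵖ)) * t = ((1 : E) ⊗ₜ[k] MulOpposite.op b) * t) ∧
      ∀ L : E ⊗[k] Eᵐᵒᵖ →ₗ[k] E, (∀ a b, L (a ⊗ₜ b) = a * b.unop) → L t = 1 := by
  let _ : Module (E ⊗[k] Eᵐᵒᵖ) E := envModuleSelf k E
  have hs : ∀ (a : E) (b : Eᵐᵒᵖ) (x : E), (a ⊗ₜ[k] b) • x = a * x * b.unop := env_smul k E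
  have hp : Module.Projective (E ⊗[k] Eᵐᵒᵖ) E := hsep
  let μ : (E ⊗[k] Eᵐᵒᵖ) →ₗ[E ⊗[k] Eᵐᵒᵖ] E := LinearMap.toSpanSingleton _ _ 1
  have hμ : Function.Surjective μ := fun e => ⟨e ⊗ₜ 1, by
    simp [μ, LinearMap.toSpanSingleton_apply, hs]⟩
  obtain ⟨σ, hσ⟩ := Module.projective_lifting_property μ LinearMap.id hμ
  refine ⟨σ 1, ?_, ?_⟩
  · intro b
    rw [← smul_eq_mul, ← smul_eq_mul, ← map_smul, ← map_smul, hs, hs]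
    simp
  · intro L hL
    have h1 : ∀ u, L u = μ u := by
      intro u
      induction u with
      | zero => rw [map_zero, map_zero]
      | add u v hu hv => rw [map_add, map_add, hu, hv]
      | tmul a b => rw [hL]; simp [μ, LinearMap.toSpanSingleton_apply, hs]
    rw [h1]
    exact LinearMap.congr_fun hσ 1

variable {k Λ}
variable {X : Type u} [AddCommGroup X] [Module k X] [Module Λ X] [IsScalarTower k Λ X]
  [Module (Λ ⊗[k] Λᵐᵒᵖ) X]

theorem ksm (hl : ∀ (a : Λ) (x : X), a • x = (a ⊗ₜ[k] (1 : Λᵐᵒᵖ)) • x) (c : k) (x : X) :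
    c • x = (algebraMap k Λ c ⊗ₜ[k] (1 : Λᵐᵒᵖ)) • x := by
  rw [← hl, algebraMap_smul]

/-- right action as a bilinear map -/
noncomputable def Ract (hl : ∀ (a : Λ) (x : X), a • x = (a ⊗ₜ[k] (1 : Λᵐᵒᵖ)) • x) :
    Λ →ₗ[k] X →ₗ[k] X :=
  LinearMap.mk₂ k (fun b x => ((1 : Λ) ⊗ₜ[k] MulOpposite.op b) • x)
    (by intro a b x; rw [MulOpposite.op_add, TensorProduct.tmul_add, add_smul])
    (by
      intro c b x
      rw [ksm hl, smul_smul, MulOpposite.op_smul, ← TensorProduct.smul_tmul,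
        Algebra.TensorProduct.tmul_mul_tmul, Algebra.smul_def]
      simp)
    (by intro b x y; rw [smul_add])
    (by
      intro c b x
      rw [ksm hl, ksm hl, smul_smul, smul_smul, Algebra.TensorProduct.tmul_mul_tmul,
        Algebra.TensorProduct.tmul_mul_tmul]
      simp)

theorem Ract_apply (hl : ∀ (a : Λ) (x : X), a • x = (a ⊗ₜ[k] (1 : Λᵐᵒᵖ)) • x) (b : Λ) (x : X) :
    Ract hl b x = ((1 : Λ) ⊗ₜ[k] MulOpposite.op b) • x := rfl

theorem Ract_mul (hl : ∀ (a : Λ) (x : X), a • x = (a ⊗ₜ[k] (1 : Λᵐᵒᵖ)) • x) (b c : Λ) (x : X) :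
    Ract hl (b * c) x = Ract hl c (Ract hl b x) := by
  simp only [Ract_apply, smul_smul, Algebra.TensorProduct.tmul_mul_tmul]
  simp

theorem Ract_left (hl : ∀ (a : Λ) (x : X), a • x = (a ⊗ₜ[k] (1 : Λᵐᵒᵖ)) • x) (b c : Λ) (x : X) :
    Ract hl b (c • x) = c • Ract hl b x := by
  simp only [Ract_apply, hl, smul_smul, Algebra.TensorProduct.tmul_mul_tmul]
  simp

theorem retract_exists
    (E : Type u) [Ring E] [Algebra k E] (f : Λ →ₐ[k] E)
    (hsurj : Function.Surjective f)
    (hsep : @Module.Projective (E ⊗[k] Eᵐᵒᵖ) _ E _ (TensorProduct.Algebra.module))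
    [Module Λ E] [IsScalarTower k Λ E] (hE : ∀ (a : Λ) (e : E), a • e = f a * e)
    (hl : ∀ (a : Λ) (x : X), a • x = (a ⊗ₜ[k] (1 : Λᵐᵒᵖ)) • x)
    (hJ : ∀ j : Λ, f j = 0 → ∀ x : X, ((1 : Λ) ⊗ₜ[k] MulOpposite.op j) • x = 0) :
    ∃ (i : X →ₗ[Λ ⊗[k] Λᵐᵒᵖ] BHom k Λ E X) (r : BHom k Λ E X →ₗ[Λ ⊗[k] Λᵐᵒᵖ] X),
      ∀ x, r (i x) = x := by
  obtain ⟨t, ht1, ht2⟩ := sep_elt k E hsep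
  obtain ⟨s, hs⟩ := LinearMap.exists_rightInverse_of_surjective f.toLinearMap
    (LinearMap.range_eq_top.2 hsurj)
  have hs' : ∀ e, f (s e) = e := fun e => LinearMap.congr_fun hs e
  have hR : ∀ a b : Λ, f a = f b → ∀ x : X, Ract hl a x = Ract hl b x := by
    intro a b hab x
    have := hJ (a - b) (by rw [map_sub, hab, sub_self]) x
    rw [← Ract_apply hl, map_sub, LinearMap.sub_apply] at this
    exact sub_eq_zero.1 this
  let B : BHom k Λ E X → (E ⊗[k] Eᵐᵒᵖ →ₗ[k] X) := fun φ => TensorProduct.lift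
    (((Ract hl ∘ₗ s ∘ₗ (MulOpposite.opLinearEquiv k).symm.toLinearMap).flip) ∘ₗ (show E →ₗ[k] X from φ))
  have hB : ∀ φ a b, B φ (a ⊗ₜ b) = Ract hl (s b.unop) (φ a) := fun φ a b => rfl
  have hBadd : ∀ φ ψ u, B (φ + ψ) u = B φ u + B ψ u := by
    intro φ ψ u
    induction u with
    | zero => simp only [map_zero, add_zero]
    | add u v hu hv => rw [map_add, map_add, map_add, hu, hv]; abel
    | tmul a b => rw [hB, hB, hB, BHom.add_apply, map_add]
  let i0 : X →+ BHom k Λ E X := AddMonoidHom.mk' (fun x => BHom.mk ((Ract hl ∘ₗ s).flip x))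
    (by intro x y; rw [map_add]; rfl)
  have hi0 : ∀ x e, i0 x e = Ract hl (s e) x := fun x e => rfl
  let r0 : BHom k Λ E X →+ X := AddMonoidHom.mk' (fun φ => B φ t) (fun φ ψ => hBadd φ ψ t)
  refine ⟨mkBi i0 ?_ ?_, mkBi r0 ?_ ?_, ?_⟩
  · intro a x
    ext e
    rw [BHom.tsmul_apply, hi0, hi0, ← hl, Ract_left]
    simp
  · intro b x
    ext e
    rw [BHom.tsmul_apply, hi0, hi0, one_smul, hE]
    change Ract hl (s e) (Ract hl b.unop x) = _
    rw [← Ract_mul]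
    apply hR
    simp [hs']
  · intro a φ
    rw [← hl]
    have : ∀ u, B ((a ⊗ₜ[k] (1 : Λᵐᵒᵖ)) • φ : BHom k Λ E X) u = a • B φ u := by
      intro u
      induction u with
      | zero => rw [map_zero, map_zero, smul_zero]
      | add u v hu hv => rw [map_add, map_add, hu, hv, smul_add]
      | tmul e e' =>
        rw [hB, hB, BHom.tsmul_apply, Ract_left]; simp
    exact this t
  · intro b φ
    have h1 : ∀ u, B (((1 : Λ) ⊗ₜ[k] b) • φ : BHom k Λ E X) u =
        B φ ((f b.unop ⊗ₜ[k] (1 : Eᵐᵒᵖ)) * u) := by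
      intro u
      induction u with
      | zero => rw [map_zero, mul_zero, map_zero]
      | add u v hu hv => rw [map_add, mul_add, map_add, hu, hv]
      | tmul e e' =>
        rw [Algebra.TensorProduct.tmul_mul_tmul, hB, hB, BHom.tsmul_apply, one_smul, hE, one_mul]
    have h2 : ∀ u, B φ (((1 : E) ⊗ₜ[k] MulOpposite.op (f b.unop)) * u) =
        Ract hl b.unop (B φ u) := by
      intro u
      induction u with
      | zero => rw [mul_zero, map_zero, map_zero]
      | add u v hu hv => rw [mul_add, map_add, map_add, map_add, hu, hv]
      | tmul e e' =>
        rw [Algebra.TensorProduct.tmul_mul_tmul, hB, hB, ← Ract_mul, one_mul]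
        apply hR
        simp [hs']
    exact (h1 t).trans ((congrArg _ (ht1 _)).trans (h2 t))
  · intro x
    change B (i0 x) t = x
    let L : E ⊗[k] Eᵐᵒᵖ →ₗ[k] E := TensorProduct.lift
      ((LinearMap.mul k E).compl₂ (MulOpposite.opLinearEquiv k).symm.toLinearMap)
    have hL : ∀ a b, L (a ⊗ₜ b) = a * b.unop := fun a b => rfl
    have h1 : ∀ u, B (i0 x) u = Ract hl (s (L u)) x := by
      intro u
      induction u with
      | zero => simp only [map_zero, LinearMap.zero_apply]
      | add u v hu hv => simp only [map_add, LinearMap.add_apply, hu, hv]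
      | tmul e e' =>
        rw [hB, hL]
        refine (Ract_mul hl _ _ x).symm.trans ?_
        apply hR
        simp [hs']
    rw [h1, ht2 L hL, hR (s 1) 1 (by rw [hs', map_one]) x, Ract_apply, MulOpposite.op_one,
      ← Algebra.TensorProduct.one_def, one_smul]

end retract

theorem main_step
    (E : Type u) [Ring E] [Algebra k E] (f : Λ →ₐ[k] E)
    (hsurj : Function.Surjective f)
    (hsep : @Module.Projective (E ⊗[k] Eᵐᵒᵖ) _ E _ (TensorProduct.Algebra.module)) (m : ℕ)
    (ha : ∀ M N : ModuleCat.{u} Λ, Subsingleton (Abelian.Ext.{u} M N (m+1)))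
    (X : Type u) [AddCommGroup X] [Module (Λ ⊗[k] Λᵐᵒᵖ) X]
    (hJ : ∀ j : Λ, f j = 0 → ∀ x : X, ((1 : Λ) ⊗ₜ[k] MulOpposite.op j) • x = 0) :
    Subsingleton (Abelian.Ext.{u} (bimod k Λ) (ModuleCat.of (Λ ⊗[k] Λᵐᵒᵖ) X) (m+1)) := by
  let _ : Module Λ X :=
    Module.compHom X (Algebra.TensorProduct.includeLeft : Λ →ₐ[k] Λ ⊗[k] Λᵐᵒᵖ).toRingHom
  let _ : Module k X := Module.compHom X (algebraMap k Λ)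
  have : IsScalarTower k Λ X := IsScalarTower.of_algebraMap_smul fun _ _ => rfl
  let _ : Module Λ E := Module.compHom E f.toRingHom
  have hE : ∀ (a : Λ) (e : E), a • e = f a * e := fun _ _ => rfl
  have : IsScalarTower k Λ E := IsScalarTower.of_algebraMap_smul fun c e => by
    rw [hE, AlgHom.commutes, Algebra.smul_def]
  obtain ⟨i, r, hir⟩ := retract_exists (X := X) E f hsurj hsep hE (fun _ _ => rfl) hJ
  refine ext_retract (ModuleCat.ofHom i) (ModuleCat.ofHom r) (by ext x : 2; exact hir x) (m+1) ?_
  exact (key k Λ E m X).1 (ha _ _)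

theorem main_all
    (E : Type u) [Ring E] [Algebra k E] (f : Λ →ₐ[k] E)
    (hsurj : Function.Surjective f)
    (hsep : @Module.Projective (E ⊗[k] Eᵐᵒᵖ) _ E _ (TensorProduct.Algebra.module)) (m : ℕ)
    (ha : ∀ M N : ModuleCat.{u} Λ, Subsingleton (Abelian.Ext.{u} M N (m+1)))
    (J : Ideal Λ) (hJ : ∀ j, f j = 0 → j ∈ J) (i : ℕ) :
    ∀ (X : Type u) [AddCommGroup X] [Module (Λ ⊗[k] Λᵐᵒᵖ) X]
    (_ : ∀ j ∈ J ^ i, ∀ x : X, ((1 : Λ) ⊗ₜ[k] MulOpposite.op j) • x = 0),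
    Subsingleton (Abelian.Ext.{u} (bimod k Λ) (ModuleCat.of (Λ ⊗[k] Λᵐᵒᵖ) X) (m+1)) := by
  induction i with
  | zero =>
    intro X _ _ hX
    refine main_step k Λ E f hsurj hsep m ha X fun j _ x => hX j ?_ x
    rw [Submodule.pow_zero, Ideal.one_eq_top]; trivial
  | succ i ih =>
    intro X _ _ hX
    let X' : Submodule (Λ ⊗[k] Λᵐᵒᵖ) X :=
      { carrier := {x | ∀ j : Λ, f j = 0 → ((1 : Λ) ⊗ₜ[k] MulOpposite.op j) • x = 0}
        add_mem' := by
          intro x y hx hy j hj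
          rw [smul_add, hx j hj, hy j hj, add_zero]
        zero_mem' := fun j hj => smul_zero _
        smul_mem' := by
          intro u x hx j hj
          induction u with
          | zero => exact (congrArg _ (zero_smul (Λ ⊗[k] Λᵐᵒᵖ) x)).trans (smul_zero _)
          | add u v hu hv => rw [add_smul, smul_add, hu, hv, add_zero]
          | tmul a b =>
            have h1 := hx (b.unop * j) (by rw [map_mul, hj, mul_zero])
            have h2 : ((1 : Λ) ⊗ₜ[k] MulOpposite.op j) * (a ⊗ₜ[k] b) =
              (a ⊗ₜ[k] (1 : Λᵐᵒᵖ)) * ((1 : Λ) ⊗ₜ[k] MulOpposite.op (b.unop * j)) := by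
              simp
            rw [smul_smul, h2, mul_smul, h1, smul_zero] }
    have s := ses_mod (R := Λ ⊗[k] Λᵐᵒᵖ) (A := X') (B := X) (C := X ⧸ X') X'.subtype X'.mkQ
      X'.injective_subtype X'.mkQ_surjective
      (LinearMap.exact_subtype_mkQ X')
    refine ext_mid s _ (m+1) ?_ ?_
    · refine main_step k Λ E f hsurj hsep m ha X' ?_
      rintro j hj ⟨x, hx⟩
      exact Subtype.ext (hx j hj)
    · refine ih (X ⧸ X') ?_
      intro j hj x
      obtain ⟨x, rfl⟩ := X'.mkQ_surjective x
      rw [← map_smul]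
      refine (Submodule.Quotient.mk_eq_zero _).2 ?_
      intro l hl
      have := hX (j * l) (by rw [Submodule.pow_succ]; exact Ideal.mul_mem_mul hj (hJ l hl)) x
      rw [smul_smul, Algebra.TensorProduct.tmul_mul_tmul]
      simpa using this
end mods

theorem stmt_1 (k : Type u) [Field k] (Λ : Type u) [Ring Λ] [Algebra k Λ]
    [FiniteDimensional k Λ]
    -- `Λ/rad(Λ)` is a separable `k`-algebra:
    (E : Type u) [Ring E] [Algebra k E] (f : Λ →ₐ[k] E)
    (hsurj : Function.Surjective f)
    (hker : RingHom.ker f = Ideal.jacobson (⊥ : Ideal Λ))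
    (hsep : @Module.Projective (E ⊗[k] Eᵐᵒᵖ) _ E _ (TensorProduct.Algebra.module))
    (n : ℕ) :
    -- (a) the global dimension of `Λ` is at most `n`
    (∀ (M N : ModuleCat.{u} Λ) (m : ℕ), n < m →
        Subsingleton (((Ext k (ModuleCat.{u} Λ) m).obj (Opposite.op M)).obj N)) ↔
    -- (b) the projective dimension of `Λ` as a `Λ`-bimodule is at most `n`
    (∀ (X : ModuleCat.{u} (Λ ⊗[k] Λᵐᵒᵖ)) (m : ℕ), n < m →
        Subsingleton (((Ext k (ModuleCat.{u} (Λ ⊗[k] Λᵐᵒᵖ)) m).obj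
          (Opposite.op (@ModuleCat.of (Λ ⊗[k] Λᵐᵒᵖ) _ Λ _ (envModuleSelf k Λ)))).obj X)) := by
  constructor
  · intro ha X m hm
    obtain ⟨m, rfl⟩ := Nat.exists_eq_add_one_of_ne_zero (by omega : m ≠ 0)
    refine (oldExt_iff k (Λ ⊗[k] Λᵐᵒᵖ) _ X m).2 ?_
    have : IsArtinianRing Λ := IsArtinianRing.of_finite k Λ
    obtain ⟨i, hi⟩ := IsSemiprimaryRing.isNilpotent (R := Λ)
    have hJ : ∀ j, f j = 0 → j ∈ Ring.jacobson Λ := by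
      intro j hj
      rw [← Ideal.jacobson_bot, ← hker]; exact hj
    refine main_all k Λ E f hsurj hsep m
      (fun M N => (oldExt_iff k Λ M N m).1 (ha M N (m+1) hm)) (Ring.jacobson Λ) hJ i X ?_
    intro j hj x
    have hj0 : j = 0 := by
      rw [hi] at hj
      exact hj
    rw [hj0, MulOpposite.op_zero, TensorProduct.tmul_zero]
    exact zero_smul (Λ ⊗[k] Λᵐᵒᵖ) x
  · intro hb M N m hm
    obtain ⟨m, rfl⟩ := Nat.exists_eq_add_one_of_ne_zero (by omega : m ≠ 0)
    let _ : Module k M := ModuleCat.moduleOfAlgebraModule M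
    let _ : Module k N := ModuleCat.moduleOfAlgebraModule N
    have : IsScalarTower k Λ M := ModuleCat.isScalarTower_of_algebra_moduleCat M
    have : IsScalarTower k Λ N := ModuleCat.isScalarTower_of_algebra_moduleCat N
    refine (oldExt_iff k Λ M N m).2 ?_
    refine (key k Λ M m N).2 ?_
    exact (oldExt_iff k (Λ ⊗[k] Λᵐᵒᵖ) _ _ m).1 (hb (ModuleCat.of _ (BHom k Λ M N)) (m+1) hm)
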